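/- Let a, b ∈ ℝ satisfy a + b ≥ (j+1)/(2j+1) and min{a, b} > 1/(2(2j+1)). Then there exists a constant C > 0 depending only on j, a, b (and in particular independent of λ) such that for every real λ ≥ 1 and all nonnegative measurable f, g : Ż_λ × ℝ → [0,∞], ((1/λ)Σ_{k∈(1/λ)ℤ} ∫_ℝ (f∗g)(k,τ)² dτ)^{1/2} ≤ C·‖⟨σ⟩^a f‖_{L²_λ}·‖⟨σ⟩^b g‖_{L²_λ}. -/

import Mathlib

/-!
Write `p = 2j+1`, `σ₁, σ₂` for the modulations of the two inputs and `k` for the output frequency.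
Once the weights are moved to the kernel, the claim is an `L² × L² → L²` bound, uniform in `λ`,
for the bilinear convolution operator with kernel `⟨σ₁⟩^{-a} ⟨σ₂⟩^{-b}`. The two regions `⟨σ₁⟩ ≤ ⟨σ₂⟩` and
`⟨σ₂⟩ ≤ ⟨σ₁⟩` are exchanged by the change of variables `q ↦ x - q`, so only the first is treated
(`half_bound`). There decay in `σ₂` may be traded for decay in `σ₁`, which reduces the exponents to
the extremal pair `(1/2 - ε, 1/(2p) + ε)`; this is where `a + b ≥ (j+1)/p` and `b > 1/(2p)` enter.
The kernel is then split according to the size of `σ₁ + σ₂ = τ - k₁^p - (k - k₁)^p` (`halfKer_le`).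

* Large output frequency, `⟨σ₁ + σ₂⟩ ≤ |k|^p`. Cauchy–Schwarz (`bilin_of_kernel_sq`) reduces the
  bound to a uniform bound on the square integral of the kernel. Integration in `τ₁` leaves the
  sum over `k₁` of `⟨σ₁ + σ₂⟩^{-1/p}`. As a function of `y = |k₁ - k/2|` the polynomial
  `(k/2 + y)^p + (k/2 - y)^p` grows at least like `|k| y^{2j}` away from any point
  (`resonance_gap`), so `|σ₁ + σ₂| ≥ |k| · |y - y₀|^{2j}` for some `y₀`
  (`exists_resonance_center`); as also `|y - y₀| ≤ |k|`, the sum is bounded uniformly in `k`, `τ`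
  and `λ` (`lintegral_resn_le`).
* Small output frequency, `|k|^p ≤ ⟨σ₁ + σ₂⟩ ≤ 2⟨σ₂⟩`. The kernel is dominated by a product of a
  factor square integrable in `τ₁` for fixed frequencies (`lintegral_lowV_le`) and of a factor
  whose square is a normalised profile in `k` of width `⟨σ₂⟩^{1/p}` (`lintegral_profile_le`).
  Cauchy–Schwarz in `τ₁`, Minkowski's inequality in `k₁`, and summation in `k` conclude
  (`bilin_of_kernel_fiber`).

Sums over `(1/λ)ℤ` with weight `1/λ` are compared with integrals over `ℝ` by writing normalised
counting measure as the image of Lebesgue measure under `t ↦ ⌊λ t⌋`; `λ ≥ 1` makes the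
discretisation error at most `1`.
-/

open MeasureTheory
open scoped ENNReal

noncomputable section

/-- Japanese bracket `⟨x⟩ = (1+x²)^{1/2}`. -/
def jap (x : ℝ) : ℝ := Real.sqrt (1 + x ^ 2)

/-- Modulation `σ = τ − k^{2j+1}` at the frequency `k = m/λ ∈ Ż_λ`. -/
def sigL (j : ℕ) (lam : ℝ) (m : ℤ) (τ : ℝ) : ℝ := τ - ((m : ℝ) / lam) ^ (2 * j + 1)

/-- Convolution on `Ż_λ × ℝ` (frequencies indexed by `m ∈ ℤ∖{0}`, `k = m/λ`):
`(f∗g)(k,τ) = (1/λ)Σ_{k₁≠0, k−k₁≠0} ∫ f(k₁,τ₁) g(k−k₁,τ−τ₁) dτ₁`. -/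
def convL (lam : ℝ) (f g : ℤ → ℝ → ℝ≥0∞) (m : ℤ) (τ : ℝ) : ℝ≥0∞ :=
  ENNReal.ofReal (1 / lam) *
    ∑' m₁ : ℤ, if m₁ ≠ 0 ∧ m - m₁ ≠ 0 then ∫⁻ τ₁, f m₁ τ₁ * g (m - m₁) (τ - τ₁) else 0

/-- `L²_λ` norm: `((1/λ) Σ_k ∫ f(k,τ)² dτ)^{1/2}`. -/
def L2L (lam : ℝ) (f : ℤ → ℝ → ℝ≥0∞) : ℝ≥0∞ :=
  (ENNReal.ofReal (1 / lam) * ∑' m : ℤ, ∫⁻ τ, (f m τ) ^ 2) ^ (1 / 2 : ℝ)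

/-- Modulation weight `⟨σ⟩^b f`. -/
def wtL (j : ℕ) (lam b : ℝ) (f : ℤ → ℝ → ℝ≥0∞) : ℤ → ℝ → ℝ≥0∞ :=
  fun m τ => ENNReal.ofReal (jap (sigL j lam m τ) ^ b) * f m τ

/-! ### Cauchy–Schwarz and Minkowski in `L²` -/

lemma sq_lintegral_mul_le {α : Type*} [MeasurableSpace α] (μ : Measure α) {f g : α → ℝ≥0∞}
    (hf : Measurable f) (hg : Measurable g) :
    (∫⁻ x, f x * g x ∂μ) ^ 2 ≤ (∫⁻ x, f x ^ 2 ∂μ) * ∫⁻ x, g x ^ 2 ∂μ := by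
  have h := ENNReal.lintegral_mul_le_Lp_mul_Lq μ (p := 2) (q := 2)
    Real.HolderConjugate.two_two hf.aemeasurable hg.aemeasurable
  simp only [Pi.mul_apply, ENNReal.rpow_two] at h
  calc _ ≤ ((∫⁻ x, f x ^ 2 ∂μ) ^ (1 / 2 : ℝ) * (∫⁻ x, g x ^ 2 ∂μ) ^ (1 / 2 : ℝ)) ^ 2 := by
        gcongr
    _ = _ := by
        rw [mul_pow, ← ENNReal.rpow_natCast, ← ENNReal.rpow_natCast, ← ENNReal.rpow_mul,
          ← ENNReal.rpow_mul]
        norm_num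

lemma lintegral_mul_le_rpow_half {α : Type*} [MeasurableSpace α] (μ : Measure α) {f g : α → ℝ≥0∞}
    (hf : Measurable f) (hg : Measurable g) :
    ∫⁻ x, f x * g x ∂μ ≤ (∫⁻ x, f x ^ 2 ∂μ) ^ (1 / 2 : ℝ) * (∫⁻ x, g x ^ 2 ∂μ) ^ (1 / 2 : ℝ) := by
  have h := ENNReal.lintegral_mul_le_Lp_mul_Lq μ (p := 2) (q := 2)
    Real.HolderConjugate.two_two hf.aemeasurable hg.aemeasurable
  simpa only [Pi.mul_apply, ENNReal.rpow_two] using h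

lemma rpow_half_sq (x : ℝ≥0∞) : (x ^ (1 / 2 : ℝ)) ^ 2 = x := by
  rw [← ENNReal.rpow_natCast, ← ENNReal.rpow_mul]; norm_num

lemma sq_rpow_half (x : ℝ≥0∞) : (x ^ 2) ^ (1 / 2 : ℝ) = x := by
  rw [← ENNReal.rpow_natCast, ← ENNReal.rpow_mul]; norm_num

/-- Minkowski's integral inequality in `L²`, in squared form. -/
lemma minkowski_sq {α β : Type*} [MeasurableSpace α] [MeasurableSpace β] (μ : Measure α)
    (ρ : Measure β) [SFinite μ] [SFinite ρ] {A : α → β → ℝ≥0∞}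
    (hA : Measurable (Function.uncurry A)) :
    ∫⁻ t, (∫⁻ m, A m t ∂μ) ^ 2 ∂ρ ≤ (∫⁻ m, (∫⁻ t, A m t ^ 2 ∂ρ) ^ (1 / 2 : ℝ) ∂μ) ^ 2 := by
  have hA1 : ∀ m, Measurable (A m) := fun m => hA.comp (by fun_prop : Measurable fun t => (m, t))
  have hA2 : ∀ t, Measurable fun m => A m t :=
    fun t => hA.comp (by fun_prop : Measurable fun m => (m, t))
  have hN : Measurable fun m => (∫⁻ t, A m t ^ 2 ∂ρ) ^ (1 / 2 : ℝ) := by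
    have : Measurable fun m => ∫⁻ t, A m t ^ 2 ∂ρ := (hA.pow_const 2).lintegral_prod_right
    fun_prop
  have hm1 : Measurable fun x : β × α => A x.2 x.1 :=
    hA.comp (by fun_prop : Measurable fun x : β × α => (x.2, x.1))
  have hmI : Measurable fun t => ∫⁻ m, A m t ∂μ := hm1.lintegral_prod_right
  calc ∫⁻ t, (∫⁻ m, A m t ∂μ) ^ 2 ∂ρ
      = ∫⁻ t, ∫⁻ m, A m t * (∫⁻ n, A n t ∂μ) ∂μ ∂ρ := by
        congr 1; ext t
        rw [lintegral_mul_const _ (hA2 t), sq]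
    _ = ∫⁻ m, ∫⁻ t, A m t * (∫⁻ n, A n t ∂μ) ∂ρ ∂μ := by
        apply lintegral_lintegral_swap
        exact (hm1.mul (hmI.comp measurable_fst)).aemeasurable
    _ = ∫⁻ m, ∫⁻ n, ∫⁻ t, A m t * A n t ∂ρ ∂μ ∂μ := by
        congr 1; ext m
        rw [← lintegral_lintegral_swap]
        · congr 1; ext t
          rw [lintegral_const_mul _ (hA2 t)]
        · exact (((hA1 m).comp measurable_fst).mul hm1).aemeasurable
    _ ≤ ∫⁻ m, ∫⁻ n, (∫⁻ t, A m t ^ 2 ∂ρ) ^ (1 / 2 : ℝ) * (∫⁻ t, A n t ^ 2 ∂ρ) ^ (1 / 2 : ℝ)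
          ∂μ ∂μ := by
        gcongr with m n
        exact lintegral_mul_le_rpow_half ρ (hA1 m) (hA1 n)
    _ = _ := by
        simp_rw [lintegral_const_mul _ hN]
        rw [lintegral_mul_const _ hN, sq]

/-- Cauchy–Schwarz bound for a bilinear convolution operator with kernel `K`. -/
lemma bilin_of_kernel_sq {G : Type*} [AddCommGroup G] [MeasurableSpace G] [MeasurableAdd₂ G]
    [MeasurableNeg G] (ν : Measure G) [SFinite ν] [ν.IsAddRightInvariant]
    {K : G → G → ℝ≥0∞} {F H : G → ℝ≥0∞} (hK : Measurable (Function.uncurry K))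
    (hF : Measurable F) (hH : Measurable H) {C : ℝ≥0∞}
    (hC : ∀ x, ∫⁻ q, K x q ^ 2 ∂ν ≤ C) :
    ∫⁻ x, (∫⁻ q, K x q * (F q * H (x - q)) ∂ν) ^ 2 ∂ν
      ≤ C * ((∫⁻ q, F q ^ 2 ∂ν) * ∫⁻ q, H q ^ 2 ∂ν) := by
  have : MeasurableSub₂ G := ⟨by simp_rw [sub_eq_add_neg]; fun_prop⟩
  calc _ ≤ ∫⁻ x, C * ∫⁻ q, (F q * H (x - q)) ^ 2 ∂ν ∂ν := by
        gcongr with x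
        refine (sq_lintegral_mul_le ν ?_ ?_).trans (by gcongr; exact hC x)
        · exact hK.comp (by fun_prop : Measurable fun q => (x, q))
        · fun_prop
    _ = C * ∫⁻ x, ∫⁻ q, (F q * H (x - q)) ^ 2 ∂ν ∂ν := by
        rw [lintegral_const_mul]
        apply Measurable.lintegral_prod_right
        fun_prop
    _ = C * ∫⁻ q, ∫⁻ x, (F q * H (x - q)) ^ 2 ∂ν ∂ν := by
        rw [lintegral_lintegral_swap]
        apply Measurable.aemeasurable
        fun_prop
    _ = C * ∫⁻ q, F q ^ 2 * ∫⁻ x, H x ^ 2 ∂ν ∂ν := by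
        congr 2; ext q
        simp_rw [mul_pow]
        rw [lintegral_const_mul _ (by fun_prop),
          lintegral_sub_right_eq_self (fun x => H x ^ 2) q]
    _ = _ := by
        rw [lintegral_mul_const _ (by fun_prop)]

/-- Bound for a bilinear convolution operator whose kernel is a product `V · U`, where `V` is
square integrable in `τ₁` uniformly in the remaining variables, and `U` depends only on the output
frequency `k` and the second input point, and is square integrable in `k`. For fixed `k` this is
Cauchy–Schwarz in `τ₁` and Minkowski's inequality in `k₁`; the result is then summed in `k`. -/
lemma bilin_of_kernel_fiber (μ : Measure ℤ) [SFinite μ] [μ.IsAddLeftInvariant] [μ.IsNegInvariant]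
    {V : ℤ × ℝ → ℤ × ℝ → ℝ≥0∞} {U : ℤ → ℤ × ℝ → ℝ≥0∞} {F H : ℤ × ℝ → ℝ≥0∞}
    (hV : Measurable (Function.uncurry V)) (hU : Measurable (Function.uncurry U))
    (hF : Measurable F) (hH : Measurable H) {C C' : ℝ≥0∞}
    (hC : ∀ x m, ∫⁻ t, V x (m, t) ^ 2 ≤ C) (hC' : ∀ z, ∫⁻ m, U m z ^ 2 ∂μ ≤ C') :
    ∫⁻ x, (∫⁻ q, (V x q * U x.1 (x - q)) * (F q * H (x - q)) ∂(μ.prod volume)) ^ 2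
        ∂(μ.prod volume)
      ≤ C * C' * ((∫⁻ q, F q ^ 2 ∂(μ.prod volume)) * ∫⁻ q, H q ^ 2 ∂(μ.prod volume)) := by
  have hV' : ∀ {γ : Type} [MeasurableSpace γ] {a b : γ → ℤ × ℝ}, Measurable a → Measurable b →
      Measurable fun x => V (a x) (b x) := fun ha hb => hV.comp (ha.prodMk hb)
  have hU' : ∀ {γ : Type} [MeasurableSpace γ] {a : γ → ℤ} {b : γ → ℤ × ℝ}, Measurable a →
      Measurable b → Measurable fun x => U (a x) (b x) := fun ha hb => hU.comp (ha.prodMk hb)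
  -- the squared mass of `F` on a frequency fibre, and that of `U k * H`
  let φ : ℤ → ℝ≥0∞ := fun m => ∫⁻ t, F (m, t) ^ 2
  let ψ : ℤ → ℤ → ℝ≥0∞ := fun k n => ∫⁻ t, (U k (n, t) * H (n, t)) ^ 2
  let A : ℤ → ℤ → ℝ → ℝ≥0∞ := fun k m t =>
    ∫⁻ s, (V (k, t) (m, s) * U k (k - m, t - s)) * (F (m, s) * H (k - m, t - s))
  have hAm : ∀ k, Measurable (Function.uncurry (A k)) := by
    intro k
    have h : Measurable (fun z : (ℤ × ℝ) × ℝ => (V (k, z.1.2) (z.1.1, z.2) *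
      U k (k - z.1.1, z.1.2 - z.2)) * (F (z.1.1, z.2) * H (k - z.1.1, z.1.2 - z.2))) := by
      refine ((hV' (by fun_prop) (by fun_prop)).mul (hU' (by fun_prop) (by fun_prop))).mul ?_
      fun_prop
    exact h.lintegral_prod_right
  have hAsq : ∀ k m, ∫⁻ t, A k m t ^ 2 ≤ C * (φ m * ψ k (k - m)) := by
    intro k m
    have hUm : Measurable fun t : ℝ => U k (k - m, t) := hU' (by fun_prop) (by fun_prop)
    calc _ ≤ ∫⁻ t, C * ∫⁻ s, (F (m, s) * (U k (k - m, t - s) * H (k - m, t - s))) ^ 2 := by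
          gcongr with t
          have : A k m t = ∫⁻ s, V (k, t) (m, s) *
              (F (m, s) * (U k (k - m, t - s) * H (k - m, t - s))) := by
            exact lintegral_congr fun s => by ring
          rw [this]
          refine (sq_lintegral_mul_le _ ?_ ?_).trans (by gcongr; exact hC (k, t) m)
          · exact hV' (by fun_prop) (by fun_prop)
          · refine Measurable.mul (by fun_prop) (Measurable.mul ?_ (by fun_prop))
            exact hU' (by fun_prop) (by fun_prop)
      _ = C * ∫⁻ t, ∫⁻ s, (F (m, s) * (U k (k - m, t - s) * H (k - m, t - s))) ^ 2 := by
          rw [lintegral_const_mul]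
          apply Measurable.lintegral_prod_right
          refine (Measurable.mul (by fun_prop) (Measurable.mul ?_ (by fun_prop))).pow_const 2
          exact hU' (by fun_prop) (by fun_prop)
      _ = C * ∫⁻ s, ∫⁻ t, (F (m, s) * (U k (k - m, t - s) * H (k - m, t - s))) ^ 2 := by
          rw [lintegral_lintegral_swap]
          apply Measurable.aemeasurable
          refine (Measurable.mul (by fun_prop) (Measurable.mul ?_ (by fun_prop))).pow_const 2
          exact hU' (by fun_prop) (by fun_prop)
      _ = C * ∫⁻ s, F (m, s) ^ 2 * ψ k (k - m) := by
          congr 1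
          refine lintegral_congr fun s => ?_
          simp_rw [mul_pow (F (m, s))]
          rw [lintegral_const_mul,
            lintegral_sub_right_eq_self (fun t => (U k (k - m, t) * H (k - m, t)) ^ 2) s]
          exact ((hUm.comp (by fun_prop)).mul (by fun_prop)).pow_const 2
      _ = _ := by rw [lintegral_mul_const _ (by fun_prop)]
  have hφm : Measurable φ := measurable_of_countable _
  have hψm : ∀ k, Measurable (ψ k) := fun k => measurable_of_countable _
  have hF2 : ∫⁻ q, F q ^ 2 ∂(μ.prod volume) = ∫⁻ m, φ m ∂μ :=
    lintegral_prod _ (by fun_prop)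
  have hTm : Measurable fun x : ℤ × ℝ =>
      ∫⁻ q, (V x q * U x.1 (x - q)) * (F q * H (x - q)) ∂(μ.prod volume) := by
    apply Measurable.lintegral_prod_right
    refine Measurable.mul (Measurable.mul ?_ ?_) (by fun_prop)
    · exact hV' (by fun_prop) (by fun_prop)
    · exact hU' (by fun_prop) (by fun_prop)
  calc _ = ∫⁻ k, ∫⁻ t, (∫⁻ m, A k m t ∂μ) ^ 2 ∂volume ∂μ := by
        rw [lintegral_prod _ (hTm.pow_const 2).aemeasurable]
        congr 1; ext k; congr 1; ext t; congr 1
        rw [lintegral_prod]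
        · rfl
        · apply Measurable.aemeasurable
          refine Measurable.mul (Measurable.mul ?_ ?_) (by fun_prop)
          · exact hV' (by fun_prop) (by fun_prop)
          · exact hU' (by fun_prop) (by fun_prop)
    _ ≤ ∫⁻ k, C * ((∫⁻ m, φ m ∂μ) * ∫⁻ n, ψ k n ∂μ) ∂μ := by
        gcongr with k
        refine (minkowski_sq μ volume (hAm k)).trans ?_
        calc _ ≤ (∫⁻ m, (C ^ (1 / 2 : ℝ) * φ m ^ (1 / 2 : ℝ)) * ψ k (k - m) ^ (1 / 2 : ℝ) ∂μ) ^ 2 := by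
              gcongr with m
              rw [mul_assoc, ← ENNReal.mul_rpow_of_nonneg _ _ (by norm_num),
                ← ENNReal.mul_rpow_of_nonneg _ _ (by norm_num)]
              gcongr
              exact hAsq k m
          _ ≤ _ := by
              refine (sq_lintegral_mul_le μ (measurable_of_countable _)
                (measurable_of_countable _)).trans_eq ?_
              simp_rw [mul_pow, rpow_half_sq]
              rw [lintegral_const_mul _ hφm, lintegral_sub_left_eq_self (ψ k) k, mul_assoc]
    _ = C * ((∫⁻ m, φ m ∂μ) * ∫⁻ k, ∫⁻ n, ψ k n ∂μ ∂μ) := by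
        rw [lintegral_const_mul _ (measurable_of_countable _),
          lintegral_const_mul _ (measurable_of_countable _)]
    _ ≤ C * ((∫⁻ m, φ m ∂μ) * (C' * ∫⁻ q, H q ^ 2 ∂(μ.prod volume))) := by
        gcongr
        calc _ = ∫⁻ k, ∫⁻ z, (U k z * H z) ^ 2 ∂(μ.prod volume) ∂μ := by
              congr 1; ext k
              rw [lintegral_prod]
              refine Measurable.aemeasurable ((Measurable.mul ?_ (by fun_prop)).pow_const 2)
              exact hU' (by fun_prop) (by fun_prop)
          _ = ∫⁻ z, ∫⁻ k, (U k z * H z) ^ 2 ∂μ ∂(μ.prod volume) := by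
              rw [lintegral_lintegral_swap]
              refine Measurable.aemeasurable ((Measurable.mul ?_ (by fun_prop)).pow_const 2)
              exact hU' (by fun_prop) (by fun_prop)
          _ ≤ ∫⁻ z, C' * H z ^ 2 ∂(μ.prod volume) := by
              gcongr with z
              simp_rw [mul_pow]
              rw [lintegral_mul_const _ (measurable_of_countable _)]
              gcongr
              exact hC' z
          _ = _ := by rw [lintegral_const_mul _ (by fun_prop)]
    _ = _ := by rw [hF2]; ring

/-! ### Normalised counting measure on `(1/λ)ℤ` -/

/-- The measure `(1/λ) Σ_{m ∈ ℤ} δ_m`, i.e. normalised counting measure on `(1/λ)ℤ ≅ ℤ`. -/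
def freqMeasure (lam : ℝ) : Measure ℤ := ENNReal.ofReal (1 / lam) • Measure.count

instance (lam : ℝ) : SFinite (freqMeasure lam) := by unfold freqMeasure; infer_instance

instance (lam : ℝ) : (freqMeasure lam).IsAddLeftInvariant := by
  unfold freqMeasure; infer_instance

instance (lam : ℝ) : (freqMeasure lam).IsAddRightInvariant := by
  unfold freqMeasure; infer_instance

instance (lam : ℝ) : (freqMeasure lam).IsNegInvariant := by
  unfold freqMeasure
  refine ⟨?_⟩
  rw [Measure.neg, Measure.map_smul]
  congr 1
  exact Measure.neg_eq_self _

instance (lam : ℝ) : ((freqMeasure lam).prod (volume : Measure ℝ)).IsNegInvariant := by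
  refine ⟨?_⟩
  have h := Measure.map_prod_map (freqMeasure lam) (volume : Measure ℝ) (f := Neg.neg)
    (g := Neg.neg) measurable_neg measurable_neg
  rw [show Measure.map Neg.neg (freqMeasure lam) = freqMeasure lam from Measure.neg_eq_self _,
    show Measure.map Neg.neg (volume : Measure ℝ) = volume from Measure.neg_eq_self _] at h
  exact h.symm

lemma lintegral_freqMeasure (lam : ℝ) (φ : ℤ → ℝ≥0∞) :
    ∫⁻ m, φ m ∂(freqMeasure lam) = ENNReal.ofReal (1 / lam) * ∑' m, φ m := by
  rw [freqMeasure, lintegral_smul_measure, lintegral_count, smul_eq_mul]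

/-- Normalised counting measure is the image of Lebesgue measure under `t ↦ ⌊λ t⌋`; this turns
sums over `(1/λ)ℤ` into integrals over `ℝ`. -/
lemma map_floor (lam : ℝ) (hl : 0 < lam) :
    Measure.map (fun t : ℝ => ⌊lam * t⌋) volume = freqMeasure lam := by
  have hm : Measurable (fun t : ℝ => ⌊lam * t⌋) := by fun_prop
  refine Measure.ext_iff_singleton.2 fun m => ?_
  rw [Measure.map_apply hm (measurableSet_singleton m), freqMeasure, Measure.smul_apply,
    Measure.count_singleton, smul_eq_mul, mul_one]
  have : (fun t : ℝ => ⌊lam * t⌋) ⁻¹' {m} = Set.Ico ((m : ℝ) / lam) ((m + 1 : ℝ) / lam) := by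
    ext t
    simp only [Set.mem_preimage, Set.mem_singleton_iff, Int.floor_eq_iff, Set.mem_Ico,
      div_le_iff₀ hl, lt_div_iff₀ hl, mul_comm]
  rw [this, Real.volume_Ico]
  congr 1; ring

lemma lintegral_freqMeasure_floor (lam : ℝ) (hl : 0 < lam) (φ : ℤ → ℝ≥0∞) :
    ∫⁻ m, φ m ∂(freqMeasure lam) = ∫⁻ t : ℝ, φ ⌊lam * t⌋ := by
  rw [← map_floor lam hl, lintegral_map (measurable_of_countable _) (by fun_prop)]

/-! ### One-dimensional integrals of Japanese brackets and profiles -/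

lemma lintegral_comp_abs_eq (φ : ℝ → ℝ≥0∞) :
    ∫⁻ t : ℝ, φ |t| = 2 * ∫⁻ t in Set.Ioi (0 : ℝ), φ t := by
  have h1 : ∫⁻ t in Set.Ioi (0 : ℝ), φ |t| = ∫⁻ t in Set.Ioi (0 : ℝ), φ t :=
    setLIntegral_congr_fun measurableSet_Ioi fun t ht => by
      simp only [abs_of_pos (Set.mem_Ioi.1 ht)]
  have h2 : ∫⁻ t in Set.Iic (0 : ℝ), φ |t| = ∫⁻ t in Set.Ioi (0 : ℝ), φ t := by
    rw [setLIntegral_congr (Iio_ae_eq_Iic (a := (0 : ℝ))).symm, ← h1]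
    have := (Measure.measurePreserving_neg (volume : Measure ℝ)).setLIntegral_comp_preimage_emb
      (MeasurableEquiv.neg ℝ).measurableEmbedding (fun t => φ |t|) (Set.Ioi 0)
    simpa using this
  rw [← lintegral_add_compl _ (measurableSet_Ioi (a := (0 : ℝ))), Set.compl_Ioi, h1, h2, two_mul]

lemma lintegral_rpow_Ioc {θ B : ℝ} (hθ : θ < 1) (hB : 0 < B) :
    ∫⁻ t in Set.Ioc 0 B, ENNReal.ofReal (t ^ (-θ)) = ENNReal.ofReal (B ^ (1 - θ) / (1 - θ)) := by
  rw [← ofReal_integral_eq_lintegral_ofReal, ← intervalIntegral.integral_of_le hB.le,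
    integral_rpow (Or.inl (by linarith)), Real.zero_rpow (by linarith)]
  · congr 1; ring_nf
  · exact (intervalIntegrable_iff_integrableOn_Ioc_of_le hB.le).1
      (intervalIntegral.intervalIntegrable_rpow' (by linarith))
  · filter_upwards [ae_restrict_mem measurableSet_Ioc] with t ht
    exact Real.rpow_nonneg ht.1.le _

lemma lintegral_rpow_Ioi {δ B : ℝ} (hδ : 0 < δ) (hB : 0 < B) :
    ∫⁻ t in Set.Ioi B, ENNReal.ofReal (t ^ (-1 - δ)) = ENNReal.ofReal (B ^ (-δ) / δ) := by
  rw [← ofReal_integral_eq_lintegral_ofReal, integral_Ioi_rpow_of_lt (by linarith) hB]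
  · congr 1
    rw [show -1 - δ + 1 = -δ by ring, neg_div_neg_eq]
  · exact integrableOn_Ioi_rpow_of_lt (by linarith) hB
  · filter_upwards [ae_restrict_mem measurableSet_Ioi] with t ht
    exact Real.rpow_nonneg (hB.trans ht).le _

lemma one_le_jap (x : ℝ) : 1 ≤ jap x := by
  rw [jap, Real.one_le_sqrt]; nlinarith [sq_nonneg x]

lemma jap_pos (x : ℝ) : 0 < jap x := one_pos.trans_le (one_le_jap x)

lemma abs_le_jap (x : ℝ) : |x| ≤ jap x := Real.abs_le_sqrt (by linarith)

lemma jap_add_le (x y : ℝ) : jap (x + y) ≤ jap x + jap y := by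
  have hx := abs_le_jap x
  have hy := abs_le_jap y
  have h1 : x * y ≤ jap x * jap y := (le_abs_self _).trans (by
    rw [abs_mul]; exact mul_le_mul hx hy (abs_nonneg _) (jap_pos x).le)
  have e1 : jap x ^ 2 = 1 + x ^ 2 := Real.sq_sqrt (by positivity)
  have e2 : jap y ^ 2 = 1 + y ^ 2 := Real.sq_sqrt (by positivity)
  refine Real.sqrt_le_iff.2 ⟨by linarith [jap_pos x, jap_pos y], ?_⟩
  nlinarith

lemma measurable_jap : Measurable jap := by unfold jap; fun_prop

/-- The scale-invariant modulation integral: integrating over the smaller modulation `⟨t - s⟩`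
while the larger one is at least `H` leaves exactly the power `H ^ (-δ)`. -/
lemma lintegral_jap_le {α δ H : ℝ} (hα : 0 < α) (hα1 : α ≤ 1) (hδ : 0 < δ) (hH : 0 < H) (s : ℝ) :
    ∫⁻ t, ENNReal.ofReal (jap (t - s) ^ (-1 + α) * max (jap (t - s)) H ^ (-α - δ))
      ≤ ENNReal.ofReal (2 * (1 / α + 1 / δ) * H ^ (-δ)) := by
  rw [lintegral_sub_right_eq_self
    (fun t => ENNReal.ofReal (jap t ^ (-1 + α) * max (jap t) H ^ (-α - δ))) s]
  have habs : ∀ t, jap |t| = jap t := fun t => by simp [jap]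
  have h := lintegral_comp_abs_eq
    (fun t => ENNReal.ofReal (jap t ^ (-1 + α) * max (jap t) H ^ (-α - δ)))
  simp only [habs] at h
  rw [h, ← Set.Ioc_union_Ioi_eq_Ioi hH.le, lintegral_union measurableSet_Ioi
    (Set.Ioc_disjoint_Ioi le_rfl)]
  have hle : ∀ t, t ≤ jap t := fun t => (le_abs_self t).trans (abs_le_jap t)
  have b1 : ∫⁻ t in Set.Ioc 0 H, ENNReal.ofReal (jap t ^ (-1 + α) * max (jap t) H ^ (-α - δ))
      ≤ ENNReal.ofReal (H ^ (-δ) / α) := by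
    calc _ ≤ ∫⁻ t in Set.Ioc 0 H, ENNReal.ofReal (H ^ (-α - δ)) *
          ENNReal.ofReal (t ^ (-(1 - α))) := by
          refine setLIntegral_mono (by fun_prop) fun t ht => ?_
          rw [← ENNReal.ofReal_mul (by positivity)]
          apply ENNReal.ofReal_le_ofReal
          rw [mul_comm, show -1 + α = -(1 - α) by ring]
          have := jap_pos t
          exact mul_le_mul (Real.rpow_le_rpow_of_nonpos hH (le_max_right _ _) (by linarith))
            (Real.rpow_le_rpow_of_nonpos ht.1 (hle t) (by linarith)) (by positivity)
            (by positivity)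
      _ = _ := by
          rw [lintegral_const_mul _ (by fun_prop), lintegral_rpow_Ioc (by linarith) hH,
            ← ENNReal.ofReal_mul (by positivity)]
          congr 1
          rw [show -δ = (-α - δ) + (1 - (1 - α)) by ring, Real.rpow_add hH]
          ring_nf
  have b2 : ∫⁻ t in Set.Ioi H, ENNReal.ofReal (jap t ^ (-1 + α) * max (jap t) H ^ (-α - δ))
      ≤ ENNReal.ofReal (H ^ (-δ) / δ) := by
    rw [← lintegral_rpow_Ioi hδ hH]
    refine setLIntegral_mono (by fun_prop) fun t ht => ?_
    have ht0 : 0 < t := hH.trans ht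
    apply ENNReal.ofReal_le_ofReal
    rw [show -1 - δ = (-1 + α) + (-α - δ) by ring, Real.rpow_add ht0]
    have := jap_pos t
    exact mul_le_mul (Real.rpow_le_rpow_of_nonpos ht0 (hle t) (by linarith))
      (Real.rpow_le_rpow_of_nonpos ht0 ((hle t).trans (le_max_left _ _)) (by linarith))
      (by positivity) (by positivity)
  calc _ ≤ 2 * (ENNReal.ofReal (H ^ (-δ) / α) + ENNReal.ofReal (H ^ (-δ) / δ)) := by gcongr
    _ = _ := by
        rw [← ENNReal.ofReal_add (by positivity) (by positivity),
          show (2 : ℝ≥0∞) = ENNReal.ofReal 2 by simp, ← ENNReal.ofReal_mul (by norm_num)]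
        congr 1; ring

/-- The truncated power `R^{-(1-θ)} max(1,r)^{-θ} 1_{r ≤ 2R}`, normalised so that its integral
over `r` is bounded independently of the scale `R ≥ 1`. -/
def profile (θ R r : ℝ) : ℝ := if r ≤ 2 * R then R ^ (-(1 - θ)) * max 1 r ^ (-θ) else 0

lemma profile_nonneg {θ R : ℝ} (hR : 0 ≤ R) (r : ℝ) : 0 ≤ profile θ R r := by
  unfold profile; split_ifs <;> positivity

/-- The sum of `profile` over `(1/λ)ℤ`, centred anywhere, is bounded uniformly in `λ ≥ 1` and
`R ≥ 1`. -/
lemma lintegral_profile_le {θ R lam : ℝ} (hθ0 : 0 ≤ θ) (hθ : θ < 1) (hR : 1 ≤ R) (hl : 1 ≤ lam)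
    (z : ℝ) :
    ∫⁻ m : ℤ, ENNReal.ofReal (profile θ R |(m : ℝ) / lam - z|) ∂(freqMeasure lam)
      ≤ ENNReal.ofReal (2 * 2 ^ θ * 3 ^ (1 - θ) / (1 - θ)) := by
  have hl0 : 0 < lam := one_pos.trans_le hl
  have hR0 : 0 < R := one_pos.trans_le hR
  rw [lintegral_freqMeasure_floor lam hl0]
  -- majorant as a function of `|t - z|`
  let φ : ℝ → ℝ≥0∞ := fun u => Set.indicator (Set.Iic (3 * R))
    (fun u => ENNReal.ofReal (R ^ (-(1 - θ)) * (max 0 u / 2) ^ (-θ))) u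
  have key : ∀ t : ℝ, t ≠ z →
      ENNReal.ofReal (profile θ R |((⌊lam * t⌋ : ℤ) : ℝ) / lam - z|) ≤ φ |t - z| := by
    intro t htz
    have hpos : 0 < |t - z| := abs_pos.2 (sub_ne_zero.2 htz)
    set r := |((⌊lam * t⌋ : ℤ) : ℝ) / lam - z| with hr
    have hfl : |t - ((⌊lam * t⌋ : ℤ) : ℝ) / lam| ≤ 1 := by
      have h1 := Int.floor_le (lam * t)
      have h2 := Int.lt_floor_add_one (lam * t)
      have h3 : t - ((⌊lam * t⌋ : ℤ) : ℝ) / lam = (lam * t - ⌊lam * t⌋) / lam := by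
        field_simp
      rw [h3, abs_of_nonneg (div_nonneg (by linarith) hl0.le), div_le_one hl0]
      linarith
    have htr : |t - z| ≤ r + 1 := by
      calc |t - z| = |(t - ((⌊lam * t⌋ : ℤ) : ℝ) / lam) + (((⌊lam * t⌋ : ℤ) : ℝ) / lam - z)| := by
            congr 1; ring
        _ ≤ _ := abs_add_le _ _
        _ ≤ _ := by linarith
    unfold profile
    split_ifs with h
    · have hmem : |t - z| ∈ Set.Iic (3 * R) := by
        simp only [Set.mem_Iic]; linarith
      simp only [φ, Set.indicator_of_mem hmem]
      apply ENNReal.ofReal_le_ofReal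
      rw [max_eq_right hpos.le]
      refine mul_le_mul_of_nonneg_left ?_ (by positivity)
      refine Real.rpow_le_rpow_of_nonpos (by positivity) ?_ (by linarith)
      rcases le_total 1 r with h1 | h1
      · rw [max_eq_right h1]; linarith
      · rw [max_eq_left h1]; linarith
    · simp
  calc _ ≤ ∫⁻ t : ℝ, φ |t - z| := by
        apply lintegral_mono_ae
        have : ∀ᵐ t : ℝ, t ≠ z := by simp [ae_iff]
        filter_upwards [this] with t ht using key t ht
    _ = 2 * ∫⁻ t in Set.Ioi (0 : ℝ), φ t := by
        rw [lintegral_sub_right_eq_self (fun t => φ |t|) z, lintegral_comp_abs_eq]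
    _ = 2 * ∫⁻ t in Set.Ioc 0 (3 * R), ENNReal.ofReal (R ^ (-(1 - θ)) * 2 ^ θ) *
          ENNReal.ofReal (t ^ (-θ)) := by
        congr 1
        simp only [φ]
        rw [setLIntegral_indicator measurableSet_Iic, Set.inter_comm, Set.Ioi_inter_Iic]
        refine setLIntegral_congr_fun measurableSet_Ioc fun t ht => ?_
        rw [← ENNReal.ofReal_mul (by positivity), max_eq_right ht.1.le,
          Real.div_rpow ht.1.le (by norm_num), Real.rpow_neg (by norm_num : (0 : ℝ) ≤ 2)]
        congr 1
        field_simp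
    _ = _ := by
        rw [lintegral_const_mul _ (by fun_prop), lintegral_rpow_Ioc hθ (by positivity),
          ← ENNReal.ofReal_mul (by positivity), show (2 : ℝ≥0∞) = ENNReal.ofReal 2 by simp,
          ← ENNReal.ofReal_mul (by norm_num)]
        congr 1
        rw [Real.mul_rpow (by norm_num) hR0.le, Real.rpow_neg hR0.le]
        have := (Real.rpow_pos_of_pos hR0 (1 - θ)).ne'
        have : 1 - θ ≠ 0 := by linarith
        field_simp

/-! ### Lower bounds for the resonance function -/

/-- The symmetric sum `(h+y)^n + (h-y)^n` and the difference `(h+y)^n - (h-y)^n` are nonnegative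
and nondecreasing in `y ≥ 0`, both having nonnegative coefficients in `h` and `y`. -/
lemma sym_pow_mono {h y z : ℝ} (hh : 0 ≤ h) (hy : 0 ≤ y) (hyz : y ≤ z) (n : ℕ) :
    (0 ≤ (h + y) ^ n + (h - y) ^ n ∧ (h + y) ^ n + (h - y) ^ n ≤ (h + z) ^ n + (h - z) ^ n) ∧
    (0 ≤ (h + y) ^ n - (h - y) ^ n ∧ (h + y) ^ n - (h - y) ^ n ≤ (h + z) ^ n - (h - z) ^ n) := by
  induction n with
  | zero => norm_num
  | succ n ih =>
    obtain ⟨⟨e0, e1⟩, o0, o1⟩ := ih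
    set E := (h + y) ^ n + (h - y) ^ n with hE
    set O := (h + y) ^ n - (h - y) ^ n with hO
    set E' := (h + z) ^ n + (h - z) ^ n with hE'
    set O' := (h + z) ^ n - (h - z) ^ n with hO'
    have r1 : (h + y) ^ (n + 1) + (h - y) ^ (n + 1) = h * E + y * O := by rw [hE, hO]; ring
    have r2 : (h + y) ^ (n + 1) - (h - y) ^ (n + 1) = h * O + y * E := by rw [hE, hO]; ring
    have r3 : (h + z) ^ (n + 1) + (h - z) ^ (n + 1) = h * E' + z * O' := by rw [hE', hO']; ring
    have r4 : (h + z) ^ (n + 1) - (h - z) ^ (n + 1) = h * O' + z * E' := by rw [hE', hO']; ring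
    rw [r1, r2, r3, r4]
    have hz := hy.trans hyz
    refine ⟨⟨by positivity, ?_⟩, by positivity, ?_⟩ <;> gcongr

/-- Quantitative monotonicity in `y ≥ 0` of the odd and even parts of `(h + y)^N`: an increment
from `y` to `z` is at least twice the pure power of `z - y`. Proved by induction on the degree. -/
lemma sym_pow_gap {h y z : ℝ} (hh : 0 ≤ h) (hy : 0 ≤ y) (hyz : y ≤ z) (n : ℕ) :
    2 * (z - y) ^ (2 * n + 1) ≤ (h + z) ^ (2 * n + 1) - (h - z) ^ (2 * n + 1) ∧
    2 * (z - y) ^ (2 * n + 2) ≤ ((h + z) ^ (2 * n + 2) + (h - z) ^ (2 * n + 2))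
      - ((h + y) ^ (2 * n + 2) + (h - y) ^ (2 * n + 2)) := by
  have hd : 0 ≤ z - y := by linarith
  -- the step from an odd exponent to the next even one
  have step : ∀ N : ℕ, 2 * (z - y) ^ N ≤ (h + z) ^ N - (h - z) ^ N →
      2 * (z - y) ^ (N + 1) ≤ ((h + z) ^ (N + 1) + (h - z) ^ (N + 1))
      - ((h + y) ^ (N + 1) + (h - y) ^ (N + 1)) := by
    intro N hN
    obtain ⟨⟨e0, e1⟩, o0, o1⟩ := sym_pow_mono hh hy hyz N
    have h1 := mul_le_mul_of_nonneg_left hN hd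
    have h2 := mul_le_mul_of_nonneg_left e1 hh
    have h3 := mul_le_mul_of_nonneg_left o1 hy
    have : 2 * (z - y) ^ (N + 1) = (z - y) * (2 * (z - y) ^ N) := by ring
    rw [this]
    calc _ ≤ _ := h1
      _ ≤ _ := by
        simp only [pow_succ]
        nlinarith
  suffices hodd : 2 * (z - y) ^ (2 * n + 1) ≤ (h + z) ^ (2 * n + 1) - (h - z) ^ (2 * n + 1) from
    ⟨hodd, step _ hodd⟩
  induction n with
  | zero => norm_num; linarith
  | succ n ih =>
    have he := step _ ih
    obtain ⟨⟨e0, e1⟩, o0, o1⟩ := sym_pow_mono hh hy hyz (2 * n + 2)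
    obtain ⟨⟨e0', e1'⟩, o0', o1'⟩ := sym_pow_mono hh (hy.trans hyz) le_rfl (2 * n + 2)
    have h1 : 2 * (z - y) ^ (2 * n + 2) ≤ (h + z) ^ (2 * n + 2) + (h - z) ^ (2 * n + 2) := by
      simp only [show 2 * n + 1 + 1 = 2 * n + 2 by ring] at he; linarith
    have h2 := mul_le_mul_of_nonneg_left h1 hd
    have h3 := mul_nonneg hh o0'
    have h4 := mul_nonneg hy e0'
    have : 2 * (z - y) ^ (2 * (n + 1) + 1) = (z - y) * (2 * (z - y) ^ (2 * n + 2)) := by ring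
    rw [this]
    calc _ ≤ _ := h2
      _ ≤ _ := by
        rw [show 2 * (n + 1) + 1 = (2 * n + 2) + 1 by ring]
        simp only [pow_succ (h + z) (2 * n + 2), pow_succ (h - z) (2 * n + 2)]
        nlinarith

/-- Convexity of the resonance polynomial in `y = x - k/2`. -/
lemma resonance_gap {j : ℕ} (hj : 1 ≤ j) {h y z : ℝ} (hh : 0 ≤ h) (hy : 0 ≤ y) (hyz : y ≤ z) :
    2 * h * (z - y) ^ (2 * j) ≤ ((h + z) ^ (2 * j + 1) + (h - z) ^ (2 * j + 1))
      - ((h + y) ^ (2 * j + 1) + (h - y) ^ (2 * j + 1)) := by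
  obtain ⟨i, rfl⟩ : ∃ i, j = i + 1 := ⟨j - 1, by omega⟩
  have h1 := mul_le_mul_of_nonneg_left (sym_pow_gap hh hy hyz i).2 hh
  obtain ⟨⟨e0, e1⟩, o0, o1⟩ := sym_pow_mono hh hy hyz (2 * i + 2)
  have h3 : 0 ≤ z * ((h + z) ^ (2 * i + 2) - (h - z) ^ (2 * i + 2))
      - y * ((h + y) ^ (2 * i + 2) - (h - y) ^ (2 * i + 2)) := by
    have hz := hy.trans hyz
    rw [sub_nonneg]; gcongr
  rw [show 2 * (i + 1) = 2 * i + 2 by ring]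
  simp only [pow_succ _ (2 * i + 2)]
  linarith

/-- For `k ≠ 0` the resonance function `τ - x^p - (k-x)^p`, `p = 2j+1`, is bounded below by
`|k|` times the `2j`-th power of the distance of `x` to one of two points `k/2 ± y₀`. -/
lemma exists_resonance_center {j : ℕ} (hj : 1 ≤ j) {k : ℝ} (hk : k ≠ 0) (τ : ℝ) :
    ∃ y₀ : ℝ, ∀ x : ℝ, |k| * |(|x - k / 2| - y₀)| ^ (2 * j)
      ≤ |τ - x ^ (2 * j + 1) - (k - x) ^ (2 * j + 1)| := by
  wlog hk0 : 0 < k generalizing k τ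
  · have hk' : 0 < -k := by
      rcases lt_or_gt_of_ne hk with h | h
      · linarith
      · exact absurd h hk0
    obtain ⟨y₀, hy⟩ := this (neg_ne_zero.2 hk) (-τ) hk'
    refine ⟨y₀, fun x => ?_⟩
    have h := hy (-x)
    have hodd : Odd (2 * j + 1) := odd_two_mul_add_one j
    rw [show -k - -x = -(k - x) by ring, hodd.neg_pow, hodd.neg_pow, abs_neg,
      show -x - -k / 2 = -(x - k / 2) by ring, abs_neg,
      show -τ - -x ^ (2 * j + 1) - -(k - x) ^ (2 * j + 1)
        = -(τ - x ^ (2 * j + 1) - (k - x) ^ (2 * j + 1)) by ring, abs_neg] at h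
    exact h
  let Q : ℝ → ℝ := fun y => (k / 2 + y) ^ (2 * j + 1) + (k / 2 - y) ^ (2 * j + 1)
  have hgap : ∀ y z : ℝ, 0 ≤ y → y ≤ z → k * (z - y) ^ (2 * j) ≤ Q z - Q y := by
    intro y z hy hyz
    have := resonance_gap hj (h := k / 2) (by linarith) hy hyz
    rwa [show 2 * (k / 2) = k by ring] at this
  have hQ : ∀ x, x ^ (2 * j + 1) + (k - x) ^ (2 * j + 1) = Q |x - k / 2| := by
    intro x
    rcases abs_cases (x - k / 2) with ⟨h, _⟩ | ⟨h, _⟩ <;> rw [h] <;> simp only [Q] <;> ring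
  rw [abs_of_pos hk0]
  by_cases hτ : τ ≤ Q 0
  · refine ⟨0, fun x => ?_⟩
    have h := hgap 0 _ le_rfl (abs_nonneg (x - k / 2))
    rw [sub_sub, hQ, sub_zero, abs_abs, abs_sub_comm τ]
    rw [sub_zero] at h
    have h2 : Q |x - k / 2| - Q 0 ≤ Q |x - k / 2| - τ := by linarith
    exact h.trans (h2.trans (le_abs_self _))
  · push Not at hτ
    have hcont : Continuous Q := by simp only [Q]; fun_prop
    set y₁ := max 1 ((τ - Q 0) / k) with hy₁
    have hy1 : 1 ≤ y₁ := le_max_left _ _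
    have hQ1 : τ ≤ Q y₁ := by
      have h := hgap 0 y₁ le_rfl (by linarith)
      have h2 : y₁ ≤ y₁ ^ (2 * j) := le_self_pow₀ hy1 (by omega)
      have h3 : τ - Q 0 ≤ k * y₁ := by
        rw [mul_comm, ← div_le_iff₀ hk0]; exact le_max_right _ _
      rw [sub_zero] at h
      nlinarith
    obtain ⟨y₀, ⟨hy0, _⟩, hy0τ⟩ := intermediate_value_Icc (by linarith : (0 : ℝ) ≤ y₁)
      hcont.continuousOn ⟨hτ.le, hQ1⟩
    refine ⟨y₀, fun x => ?_⟩
    rw [sub_sub, hQ, ← hy0τ]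
    rcases le_total y₀ |x - k / 2| with h | h
    · rw [abs_sub_comm (Q y₀), abs_of_nonneg (sub_nonneg.2 h)]
      exact (hgap _ _ hy0 h).trans (le_abs_self _)
    · rw [abs_sub_comm _ y₀, abs_of_nonneg (sub_nonneg.2 h)]
      exact (hgap _ _ (abs_nonneg _) h).trans (le_abs_self _)

/-! ### The resonant sum -/

/-- The resonance function `τ - k₁^p - (k - k₁)^p`, `p = 2j+1`, at `x = (k,τ)`. -/
def resn (j : ℕ) (lam : ℝ) (x : ℤ × ℝ) (m : ℤ) : ℝ :=
  x.2 - ((m : ℝ) / lam) ^ (2 * j + 1) - ((x.1 : ℝ) / lam - (m : ℝ) / lam) ^ (2 * j + 1)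

/-- The modulation weight `⟨σ⟩` as a function on the group `ℤ × ℝ`. -/
def modn (j : ℕ) (lam : ℝ) (q : ℤ × ℝ) : ℝ := jap (sigL j lam q.1 q.2)

lemma measurable_intCast_fst : Measurable fun q : ℤ × ℝ => (q.1 : ℝ) := by fun_prop

lemma measurable_modn (j : ℕ) (lam : ℝ) : Measurable (modn j lam) := by
  unfold modn sigL
  exact measurable_jap.comp (by fun_prop)

lemma one_le_modn (j : ℕ) (lam : ℝ) (q : ℤ × ℝ) : 1 ≤ modn j lam q := one_le_jap _

/-- The resonance identity `σ₁ + σ₂ = τ - k₁^p - (k - k₁)^p`, in the form of an inequality. -/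
lemma jap_resn_le (j : ℕ) (lam : ℝ) (x q : ℤ × ℝ) :
    jap (resn j lam x q.1) ≤ modn j lam q + modn j lam (x - q) := by
  refine le_trans (le_of_eq ?_) (jap_add_le _ _)
  congr 1
  simp only [resn, sigL, Prod.fst_sub, Prod.snd_sub, Int.cast_sub, sub_div]
  ring

/-- Uniform bound for the resonant sum in the region `⟨σ₁ + σ₂⟩ ≤ |k|^p`. -/
lemma lintegral_resn_le {j : ℕ} (hj : 1 ≤ j) {θ : ℝ} (hθ : θ = 1 - 1 / (2 * (j : ℝ) + 1))
    {lam : ℝ} (hl : 1 ≤ lam) (x : ℤ × ℝ) :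
    ∫⁻ m, ENNReal.ofReal (if jap (resn j lam x m) ≤ |(x.1 : ℝ) / lam| ^ (2 * j + 1)
      then jap (resn j lam x m) ^ (-(1 / (2 * (j : ℝ) + 1))) else 0) ∂(freqMeasure lam)
      ≤ ENNReal.ofReal (4 * (2 * 2 ^ θ * 3 ^ (1 - θ) / (1 - θ))) := by
  set P : ℝ := 2 * (j : ℝ) + 1 with hP
  have hj1 : (1 : ℝ) ≤ j := by exact_mod_cast hj
  have hP0 : 0 < P := by positivity
  have hP1 : 1 ≤ P := by linarith
  have hPi : 1 / P ≤ 1 := by rw [div_le_one hP0]; exact hP1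
  have hPi0 : 0 < 1 / P := by positivity
  have hθ0 : 0 ≤ θ := by linarith
  have hθ1 : θ < 1 := by linarith
  have h1θ : 1 - θ = 1 / P := by linarith
  have hθj : θ = ((2 * j : ℕ) : ℝ) * (1 / P) := by
    rw [hθ]; push_cast; field_simp; rw [hP]; ring
  set k : ℝ := (x.1 : ℝ) / lam with hk
  by_cases hk1 : 1 ≤ |k|
  swap
  · have hz : ∀ m, ¬ jap (resn j lam x m) ≤ |k| ^ (2 * j + 1) := by
      intro m
      have h1 := one_le_jap (resn j lam x m)
      have h2 : |k| ^ (2 * j + 1) < 1 :=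
        pow_lt_one₀ (abs_nonneg _) (not_le.1 hk1) (by omega)
      linarith
    simp [hz]
  have hk0 : 0 < |k| := by linarith
  obtain ⟨y₀, hy⟩ := exists_resonance_center hj (abs_pos.1 hk0) x.2
  let T : ℝ → ℝ → ℤ → ℝ≥0∞ := fun R z m =>
    ENNReal.ofReal (profile θ R |(m : ℝ) / lam - z|)
  have hT : ∀ R, 1 ≤ R → ∀ z, ∫⁻ m, T R z m ∂(freqMeasure lam)
      ≤ ENNReal.ofReal (2 * 2 ^ θ * 3 ^ (1 - θ) / (1 - θ)) :=
    fun R hR z => lintegral_profile_le hθ0 hθ1 hR hl z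
  have key : ∀ m, ENNReal.ofReal (if jap (resn j lam x m) ≤ |k| ^ (2 * j + 1)
      then jap (resn j lam x m) ^ (-(1 / P)) else 0) ≤
      (T |k| (k / 2 + y₀) m + T 1 (k / 2 + y₀) m) +
      (T |k| (k / 2 - y₀) m + T 1 (k / 2 - y₀) m) := by
    intro m
    split_ifs with hc
    swap
    · simp
    set r := |(|(m : ℝ) / lam - k / 2| - y₀)| with hr
    have hyr : |k| * r ^ (2 * j) ≤ jap (resn j lam x m) := (hy _).trans (abs_le_jap _)
    have hr0 : 0 ≤ r := abs_nonneg _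
    have hrk : r ≤ |k| := by
      have h1 : |k| * r ^ (2 * j) ≤ |k| * |k| ^ (2 * j) := by
        calc _ ≤ _ := hyr
          _ ≤ _ := hc
          _ = _ := by ring
      exact le_of_pow_le_pow_left₀ (by omega) hk0.le (le_of_mul_le_mul_left h1 hk0)
    have hmain : ENNReal.ofReal (jap (resn j lam x m) ^ (-(1 / P))) ≤
        ENNReal.ofReal (profile θ |k| r) + ENNReal.ofReal (profile θ 1 r) := by
      rcases le_total r 1 with h1 | h1
      · refine le_add_left (ENNReal.ofReal_le_ofReal ?_)
        have : profile θ 1 r = 1 := by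
          rw [profile, if_pos (by linarith), max_eq_left h1]; simp
        rw [this]
        exact Real.rpow_le_one_of_one_le_of_nonpos (one_le_jap _) (by linarith)
      · refine le_add_right (ENNReal.ofReal_le_ofReal ?_)
        rw [profile, if_pos (by linarith), max_eq_right h1, h1θ]
        have hr1 : 0 < r := by linarith
        calc _ ≤ (|k| * r ^ (2 * j)) ^ (-(1 / P)) :=
              Real.rpow_le_rpow_of_nonpos (by positivity) hyr (by linarith)
          _ = _ := by
              rw [Real.mul_rpow hk0.le (by positivity), ← Real.rpow_natCast r (2 * j),
                ← Real.rpow_mul hr0, hθj, mul_neg]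
    refine hmain.trans ?_
    rcases abs_cases ((m : ℝ) / lam - k / 2) with ⟨h, _⟩ | ⟨h, _⟩
    · have : r = |(m : ℝ) / lam - (k / 2 + y₀)| := by rw [hr, h]; congr 1; ring
      rw [this]; exact le_add_right le_rfl
    · have : r = |(m : ℝ) / lam - (k / 2 - y₀)| := by
        rw [hr, h, ← abs_neg]; congr 1; ring
      rw [this]; exact le_add_left le_rfl
  calc _ ≤ ∫⁻ m, (T |k| (k / 2 + y₀) m + T 1 (k / 2 + y₀) m) +
        (T |k| (k / 2 - y₀) m + T 1 (k / 2 - y₀) m) ∂(freqMeasure lam) := lintegral_mono key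
    _ ≤ (ENNReal.ofReal (2 * 2 ^ θ * 3 ^ (1 - θ) / (1 - θ)) +
        ENNReal.ofReal (2 * 2 ^ θ * 3 ^ (1 - θ) / (1 - θ))) +
        (ENNReal.ofReal (2 * 2 ^ θ * 3 ^ (1 - θ) / (1 - θ)) +
        ENNReal.ofReal (2 * 2 ^ θ * 3 ^ (1 - θ) / (1 - θ))) := by
        have hm : ∀ R z, Measurable (T R z) := fun _ _ => measurable_of_countable _
        rw [lintegral_add_left (measurable_of_countable _),
          lintegral_add_left (measurable_of_countable _),
          lintegral_add_left (measurable_of_countable _)]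
        gcongr <;> exact hT _ (by first | exact hk1 | exact le_rfl) _
    _ = _ := by
        have : 0 ≤ 2 * 2 ^ θ * 3 ^ (1 - θ) / (1 - θ) :=
          div_nonneg (by positivity) (by linarith)
        rw [← ENNReal.ofReal_add this this, ← ENNReal.ofReal_add (by linarith) (by linarith)]
        congr 1; ring

/-! ### The high-frequency kernel -/

/-- A negative power of the larger modulation `Y` is controlled by `max X H`, with `X` the smaller
modulation and `H ≤ 2Y` (typically the resonance function). -/
lemma rpow_neg_le_max {X Y H e : ℝ} (hX : 0 < X) (hXY : X ≤ Y) (hH : H ≤ 2 * Y) (he : 0 ≤ e) :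
    Y ^ (-e) ≤ 2 ^ e * max X H ^ (-e) := by
  have hm : 0 < max X H := hX.trans_le (le_max_left _ _)
  have h : max X H / 2 ≤ Y := by
    rw [div_le_iff₀ (by norm_num)]
    exact max_le (by linarith) (by linarith)
  calc _ ≤ (max X H / 2) ^ (-e) :=
        Real.rpow_le_rpow_of_nonpos (by positivity) h (by linarith)
    _ = _ := by
        rw [Real.div_rpow hm.le (by norm_num), Real.rpow_neg (by norm_num : (0 : ℝ) ≤ 2)]
        field_simp

/-- Kernel with extremal exponents, restricted to the first modulation being the smaller one and
to large output frequency `|k|^p ≥ ⟨σ₁ + σ₂⟩`. -/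
def highKer (j : ℕ) (lam ε : ℝ) (x q : ℤ × ℝ) : ℝ :=
  if modn j lam q ≤ modn j lam (x - q) ∧
      jap (resn j lam x q.1) ≤ |(x.1 : ℝ) / lam| ^ (2 * j + 1)
  then modn j lam q ^ (-(1 / 2) + ε) * modn j lam (x - q) ^ (-(1 / (2 * (2 * (j : ℝ) + 1))) - ε)
  else 0

lemma measurable_highKer (j : ℕ) (lam ε : ℝ) :
    Measurable fun z : (ℤ × ℝ) × (ℤ × ℝ) => highKer j lam ε z.1 z.2 := by
  have hm := measurable_modn j lam
  have h1 : Measurable fun z : (ℤ × ℝ) × (ℤ × ℝ) => modn j lam z.2 := by fun_prop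
  have h2 : Measurable fun z : (ℤ × ℝ) × (ℤ × ℝ) => modn j lam (z.1 - z.2) := by fun_prop
  have h3 : Measurable fun z : (ℤ × ℝ) × (ℤ × ℝ) => jap (resn j lam z.1 z.2.1) := by
    unfold resn; exact measurable_jap.comp (by fun_prop)
  unfold highKer
  refine Measurable.ite ?_ (by fun_prop) measurable_const
  exact (measurableSet_le h1 h2).inter (measurableSet_le h3 (by fun_prop))

lemma lintegral_highKer_sq_le {j : ℕ} (hj : 1 ≤ j) {ε : ℝ} (hε : 0 < ε) (hε1 : ε ≤ 1 / 2) :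
    ∃ C : ℝ, ∀ lam : ℝ, 1 ≤ lam → ∀ x : ℤ × ℝ,
      ∫⁻ q, ENNReal.ofReal (highKer j lam ε x q) ^ 2 ∂((freqMeasure lam).prod volume)
        ≤ ENNReal.ofReal C := by
  set P : ℝ := 2 * (j : ℝ) + 1 with hP
  have hP0 : 0 < P := by positivity
  have hPi0 : 0 < 1 / P := by positivity
  set α := 2 * ε with hα
  set D : ℝ := 2 ^ (α + 1 / P) * (2 * (1 / α + 1 / (1 / P))) with hD
  have hD0 : 0 ≤ D := by positivity
  set θ : ℝ := 1 - 1 / P with hθ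
  refine ⟨D * (4 * (2 * 2 ^ θ * 3 ^ (1 - θ) / (1 - θ))), fun lam hl x => ?_⟩
  have hmeas : Measurable fun q => ENNReal.ofReal (highKer j lam ε x q) :=
    ((measurable_highKer j lam ε).comp (by fun_prop : Measurable fun q => (x, q))).ennreal_ofReal
  rw [lintegral_prod _ (hmeas.pow_const 2).aemeasurable]
  have key : ∀ m : ℤ, ∫⁻ t, ENNReal.ofReal (highKer j lam ε x (m, t)) ^ 2 ≤
      ENNReal.ofReal D * ENNReal.ofReal (if jap (resn j lam x m) ≤ |(x.1 : ℝ) / lam| ^ (2 * j + 1)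
      then jap (resn j lam x m) ^ (-(1 / P)) else 0) := by
    intro m
    split_ifs with hc
    swap
    · simp [highKer, hc]
    set H := jap (resn j lam x m) with hH
    have hH0 : 0 < H := jap_pos _
    calc _ ≤ ∫⁻ t, ENNReal.ofReal (2 ^ (α + 1 / P)) *
          ENNReal.ofReal (jap (t - ((m : ℝ) / lam) ^ (2 * j + 1)) ^ (-1 + α) *
            max (jap (t - ((m : ℝ) / lam) ^ (2 * j + 1))) H ^ (-α - 1 / P)) := by
          refine lintegral_mono fun t => ?_
          rw [← ENNReal.ofReal_mul (by positivity), highKer]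
          split_ifs with h
          swap
          · simp
          have hX : modn j lam (m, t) = jap (t - ((m : ℝ) / lam) ^ (2 * j + 1)) := rfl
          rw [← hX]
          set X := modn j lam (m, t)
          set Y := modn j lam (x - (m, t))
          have hX1 : 1 ≤ X := one_le_modn _ _ _
          have hX0 : 0 < X := by linarith
          have hY0 : 0 < Y := by linarith [h.1]
          have hHY : H ≤ 2 * Y := by
            have h1 : H ≤ X + Y := jap_resn_le j lam x (m, t)
            linarith [h.1]
          rw [← ENNReal.ofReal_pow (by positivity)]
          apply ENNReal.ofReal_le_ofReal
          have e1 : (X ^ (-(1 / 2) + ε) * Y ^ (-(1 / (2 * P)) - ε)) ^ 2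
              = X ^ (-1 + α) * Y ^ (-(α + 1 / P)) := by
            rw [mul_pow, ← Real.rpow_natCast (X ^ _), ← Real.rpow_natCast (Y ^ _),
              ← Real.rpow_mul hX0.le, ← Real.rpow_mul hY0.le]
            congr 2
            · rw [hα]; push_cast; ring
            · rw [hα]; push_cast; field_simp; ring
          rw [e1]
          have e2 := rpow_neg_le_max hX0 h.1 hHY (e := α + 1 / P) (by positivity)
          calc _ ≤ X ^ (-1 + α) * (2 ^ (α + 1 / P) * max X H ^ (-(α + 1 / P))) := by gcongr
            _ = _ := by rw [show -(α + 1 / P) = -α - 1 / P by ring]; ring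
      _ ≤ ENNReal.ofReal (2 ^ (α + 1 / P)) *
          ENNReal.ofReal (2 * (1 / α + 1 / (1 / P)) * H ^ (-(1 / P))) := by
          rw [lintegral_const_mul']
          · gcongr
            exact lintegral_jap_le (by positivity) (by linarith) hPi0 hH0 _
          · exact ENNReal.ofReal_ne_top
      _ = _ := by
          rw [← ENNReal.ofReal_mul (by positivity), ← ENNReal.ofReal_mul hD0]
          congr 1
          rw [hD]; ring
  calc _ ≤ _ := lintegral_mono key
    _ ≤ _ := by
        rw [lintegral_const_mul _ (measurable_of_countable _), ENNReal.ofReal_mul hD0]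
        gcongr
        exact lintegral_resn_le hj hθ hl x

/-! ### The low-frequency kernel -/

/-- The square of the factor of the low-frequency kernel carrying the smaller modulation. -/
def lowV (j : ℕ) (lam α θ : ℝ) (x q : ℤ × ℝ) : ℝ :=
  2 ^ (α + θ / (2 * (j : ℝ) + 1)) * max 1 |(x.1 : ℝ) / lam| ^ θ *
    (modn j lam q ^ (-1 + α) *
      max (modn j lam q) (max 1 |(x.1 : ℝ) / lam| ^ (2 * j + 1))
        ^ (-α - θ / (2 * (j : ℝ) + 1)))

/-- The square of the factor of the low-frequency kernel carrying the larger modulation: a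
normalised profile in `k` of width `⟨σ₂⟩^{1/p}`. -/
def lowU (j : ℕ) (lam θ : ℝ) (m : ℤ) (z : ℤ × ℝ) : ℝ :=
  profile θ (modn j lam z ^ (1 / (2 * (j : ℝ) + 1))) |(m : ℝ) / lam - 0|

lemma measurable_lowV (j : ℕ) (lam α θ : ℝ) :
    Measurable fun z : (ℤ × ℝ) × (ℤ × ℝ) => lowV j lam α θ z.1 z.2 := by
  have hm := measurable_modn j lam
  unfold lowV
  fun_prop

lemma measurable_lowU (j : ℕ) (lam θ : ℝ) :
    Measurable fun z : ℤ × (ℤ × ℝ) => lowU j lam θ z.1 z.2 := by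
  have hm := measurable_modn j lam
  unfold lowU profile
  refine Measurable.ite (measurableSet_le (by fun_prop) (by fun_prop)) (by fun_prop)
    measurable_const

lemma lowV_nonneg (j : ℕ) (lam α θ : ℝ) (x q : ℤ × ℝ) : 0 ≤ lowV j lam α θ x q := by
  have := one_le_modn j lam q
  unfold lowV; positivity

lemma lowU_nonneg (j : ℕ) (lam θ : ℝ) (m : ℤ) (z : ℤ × ℝ) : 0 ≤ lowU j lam θ m z := by
  have := one_le_modn j lam z
  exact profile_nonneg (by positivity) _

lemma lintegral_lowV_le (j : ℕ) {lam α θ : ℝ} (hα : 0 < α) (hα1 : α ≤ 1) (hθ : 0 < θ)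
    (x : ℤ × ℝ) (m : ℤ) :
    ∫⁻ t, ENNReal.ofReal (lowV j lam α θ x (m, t)) ≤
      ENNReal.ofReal (2 ^ (α + θ / (2 * (j : ℝ) + 1)) *
        (2 * (1 / α + 1 / (θ / (2 * (j : ℝ) + 1))))) := by
  set P : ℝ := 2 * (j : ℝ) + 1 with hP
  have hP0 : 0 < P := by positivity
  set κ := max 1 |(x.1 : ℝ) / lam| with hκ
  have hκ0 : 0 < κ := by positivity
  have h := lintegral_jap_le (α := α) (δ := θ / P) (H := κ ^ (2 * j + 1)) hα hα1
    (by positivity) (by positivity) (((m : ℝ) / lam) ^ (2 * j + 1))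
  have hpow : (κ ^ (2 * j + 1)) ^ (-(θ / P)) = κ ^ (-θ) := by
    rw [← Real.rpow_natCast, ← Real.rpow_mul hκ0.le]
    congr 1
    push_cast; rw [← hP]; field_simp
  calc _ = ∫⁻ t, ENNReal.ofReal (2 ^ (α + θ / P) * κ ^ θ) *
          ENNReal.ofReal (jap (t - ((m : ℝ) / lam) ^ (2 * j + 1)) ^ (-1 + α) *
            max (jap (t - ((m : ℝ) / lam) ^ (2 * j + 1))) (κ ^ (2 * j + 1)) ^ (-α - θ / P)) := by
        refine lintegral_congr fun t => ?_
        rw [← ENNReal.ofReal_mul (by positivity)]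
        rfl
    _ ≤ ENNReal.ofReal (2 ^ (α + θ / P) * κ ^ θ) *
          ENNReal.ofReal (2 * (1 / α + 1 / (θ / P)) * (κ ^ (2 * j + 1)) ^ (-(θ / P))) := by
        rw [lintegral_const_mul' _ _ ENNReal.ofReal_ne_top]
        gcongr
    _ = _ := by
        rw [← ENNReal.ofReal_mul (by positivity), hpow, Real.rpow_neg hκ0.le]
        congr 1
        have := (Real.rpow_pos_of_pos hκ0 θ).ne'
        field_simp

/-! ### The bilinear estimate -/

/-- The weight `⟨σ₁⟩^{-a} ⟨σ₂⟩^{-b}` restricted to the first modulation being the smaller one. -/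
def halfKer (j : ℕ) (lam a b : ℝ) (x q : ℤ × ℝ) : ℝ :=
  if modn j lam q ≤ modn j lam (x - q)
  then modn j lam q ^ (-a) * modn j lam (x - q) ^ (-b) else 0

lemma measurable_halfKer (j : ℕ) (lam a b : ℝ) :
    Measurable fun z : (ℤ × ℝ) × (ℤ × ℝ) => halfKer j lam a b z.1 z.2 := by
  have hm := measurable_modn j lam
  unfold halfKer
  exact Measurable.ite (measurableSet_le (by fun_prop) (by fun_prop)) (by fun_prop)
    measurable_const

lemma halfKer_nonneg (j : ℕ) (lam a b : ℝ) (x q : ℤ × ℝ) : 0 ≤ halfKer j lam a b x q := by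
  have h1 := one_le_modn j lam q
  have h2 := one_le_modn j lam (x - q)
  unfold halfKer; split_ifs <;> positivity

/-- Trading decay in the larger modulation for decay in the smaller one reduces to the
extremal exponents `(1/2 - ε, 1/(2p) + ε)`, for which the kernel splits into the high- and
low-frequency parts. -/
lemma halfKer_le {j : ℕ} {lam ε a b θ : ℝ} (hε : 0 < ε)
    (hab : ((j : ℝ) + 1) / (2 * (j : ℝ) + 1) ≤ a + b)
    (hb : 1 / (2 * (2 * (j : ℝ) + 1)) + ε ≤ b) (hθ0 : 0 ≤ θ) (x q : ℤ × ℝ) :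
    halfKer j lam a b x q ≤ highKer j lam ε x q +
      Real.sqrt (lowV j lam (2 * ε) θ x q) * Real.sqrt (lowU j lam θ x.1 (x - q)) := by
  set P : ℝ := 2 * (j : ℝ) + 1 with hP
  have hP0 : 0 < P := by positivity
  have hP1 : 1 ≤ P := by rw [hP]; linarith [(Nat.cast_nonneg j : (0 : ℝ) ≤ j)]
  have hnn : 0 ≤ Real.sqrt (lowV j lam (2 * ε) θ x q) * Real.sqrt (lowU j lam θ x.1 (x - q)) := by
    positivity
  have hX1 := one_le_modn j lam q
  have hY1 := one_le_modn j lam (x - q)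
  have hJ := jap_resn_le j lam x q
  rw [halfKer, highKer]
  set X := modn j lam q with hX
  set Y := modn j lam (x - q) with hY
  have hX0 : 0 < X := by linarith
  have hY0 : 0 < Y := by linarith
  by_cases hXY : X ≤ Y
  swap
  · rw [if_neg hXY, if_neg (fun h => hXY h.1), zero_add]; exact hnn
  rw [if_pos hXY]
  have hred : X ^ (-a) * Y ^ (-b) ≤ X ^ (-(1 / 2) + ε) * Y ^ (-(1 / (2 * P)) - ε) := by
    have e1 : Y ^ (-b) = Y ^ (-(b - (1 / (2 * P) + ε))) * Y ^ (-(1 / (2 * P)) - ε) := by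
      rw [← Real.rpow_add hY0]; congr 1; ring
    have e2 : Y ^ (-(b - (1 / (2 * P) + ε))) ≤ X ^ (-(b - (1 / (2 * P) + ε))) :=
      Real.rpow_le_rpow_of_nonpos hX0 hXY (by linarith)
    have e3 : ((j : ℝ) + 1) / P = 1 / 2 + 1 / (2 * P) := by
      field_simp; rw [hP]; ring
    calc _ = (X ^ (-a) * Y ^ (-(b - (1 / (2 * P) + ε)))) * Y ^ (-(1 / (2 * P)) - ε) := by
          rw [e1]; ring
      _ ≤ (X ^ (-a) * X ^ (-(b - (1 / (2 * P) + ε)))) * Y ^ (-(1 / (2 * P)) - ε) := by gcongr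
      _ ≤ _ := by
          rw [← Real.rpow_add hX0]
          refine mul_le_mul_of_nonneg_right ?_ (by positivity)
          rw [e3] at hab
          exact Real.rpow_le_rpow_of_exponent_le hX1 (by linarith)
  refine hred.trans ?_
  by_cases hc : jap (resn j lam x q.1) ≤ |(x.1 : ℝ) / lam| ^ (2 * j + 1)
  · rw [if_pos ⟨hXY, hc⟩]; linarith
  rw [if_neg (fun h => hc h.2), zero_add, ← Real.sqrt_mul (lowV_nonneg _ _ _ _ _ _)]
  apply Real.le_sqrt_of_sq_le
  push Not at hc
  rw [lowV, lowU, sub_zero, profile, ← hX, ← hY, ← hP]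
  set k := |(x.1 : ℝ) / lam| with hk
  set κ := max 1 k with hκ
  have hk0 : 0 ≤ k := abs_nonneg _
  have hκ0 : 0 < κ := by positivity
  -- since `|k|^p < ⟨σ₁ + σ₂⟩ ≤ 2 ⟨σ₂⟩`
  have hk2 : k ^ (2 * j + 1) ≤ 2 * Y := by linarith
  have hκ2 : κ ^ (2 * j + 1) ≤ 2 * Y := by
    rcases le_total 1 k with h | h
    · rw [hκ, max_eq_right h]; exact hk2
    · rw [hκ, max_eq_left h, one_pow]; linarith
  have hkP : (k ^ (2 * j + 1)) ^ (1 / P) = k := by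
    rw [← Real.rpow_natCast, ← Real.rpow_mul hk0]
    push_cast
    rw [← hP, mul_one_div_cancel hP0.ne', Real.rpow_one]
  have hkR : k ≤ 2 * Y ^ (1 / P) := by
    calc k = (k ^ (2 * j + 1)) ^ (1 / P) := hkP.symm
      _ ≤ (2 * Y) ^ (1 / P) := by gcongr
      _ = 2 ^ (1 / P) * Y ^ (1 / P) := Real.mul_rpow (by norm_num) hY0.le
      _ ≤ 2 ^ (1 : ℝ) * Y ^ (1 / P) := by
          gcongr
          · norm_num
          · rw [div_le_one hP0]; exact hP1
      _ = _ := by rw [Real.rpow_one]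
  rw [if_pos hkR]
  have e1 : (X ^ (-(1 / 2) + ε) * Y ^ (-(1 / (2 * P)) - ε)) ^ 2
      = X ^ (-1 + 2 * ε) * (Y ^ (-(2 * ε + θ / P)) * (Y ^ (1 / P)) ^ (-(1 - θ))) := by
    rw [mul_pow, ← Real.rpow_natCast (X ^ _), ← Real.rpow_natCast (Y ^ _),
      ← Real.rpow_mul hX0.le, ← Real.rpow_mul hY0.le, ← Real.rpow_mul hY0.le,
      ← Real.rpow_add hY0]
    congr 2
    · push_cast; ring
    · push_cast; field_simp; ring
  have e2 := rpow_neg_le_max hX0 hXY hκ2 (e := 2 * ε + θ / P) (by positivity)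
  have e3 : κ ^ θ * κ ^ (-θ) = 1 := by
    rw [← Real.rpow_add hκ0]; simp
  rw [e1]
  calc _ ≤ X ^ (-1 + 2 * ε) * ((2 ^ (2 * ε + θ / P) *
        max X (κ ^ (2 * j + 1)) ^ (-(2 * ε + θ / P))) * (Y ^ (1 / P)) ^ (-(1 - θ))) := by gcongr
    _ = X ^ (-1 + 2 * ε) * ((2 ^ (2 * ε + θ / P) *
        max X (κ ^ (2 * j + 1)) ^ (-(2 * ε + θ / P))) * (Y ^ (1 / P)) ^ (-(1 - θ)))
          * (κ ^ θ * κ ^ (-θ)) := by rw [e3, mul_one]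
    _ = _ := by
        rw [show -(2 * ε + θ / P) = -(2 * ε) - θ / P by ring]; ring

/-- An `L²` bound, in squared form, for a function dominated by a sum of two. -/
lemma lintegral_sq_le_of_le_add {G : Type*} [MeasurableSpace G] (ν : Measure G)
    {T A B : G → ℝ≥0∞} {c d X : ℝ≥0∞} (hA : Measurable A) (hT : ∀ x, T x ≤ A x + B x)
    (hAX : ∫⁻ x, A x ^ 2 ∂ν ≤ c * X) (hBX : ∫⁻ x, B x ^ 2 ∂ν ≤ d * X) :
    ∫⁻ x, T x ^ 2 ∂ν ≤ 2 * (c + d) * X := by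
  have hsq : ∀ x y : ℝ≥0∞, (x + y) ^ 2 ≤ 2 * x ^ 2 + 2 * y ^ 2 := by
    intro x y
    have h := ENNReal.rpow_add_le_mul_rpow_add_rpow x y (p := 2) (by norm_num)
    norm_num [ENNReal.rpow_two] at h
    rwa [mul_add] at h
  calc _ ≤ ∫⁻ x, 2 * A x ^ 2 + 2 * B x ^ 2 ∂ν :=
        lintegral_mono fun x => (pow_le_pow_left' (hT x) 2).trans (hsq _ _)
    _ = 2 * ∫⁻ x, A x ^ 2 ∂ν + 2 * ∫⁻ x, B x ^ 2 ∂ν := by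
        rw [lintegral_add_left (by fun_prop), lintegral_const_mul _ (by fun_prop),
          lintegral_const_mul' _ _ (by simp)]
    _ ≤ 2 * (c * X) + 2 * (d * X) := by gcongr
    _ = _ := by ring

/-- The bilinear estimate for the part of the convolution where the first factor has the
smaller modulation: the high-frequency kernel is handled by Cauchy–Schwarz in all variables, the
low-frequency one by Cauchy–Schwarz in `τ` followed by Minkowski's inequality in `k`. -/
lemma half_bound {j : ℕ} (hj : 1 ≤ j) {a b : ℝ}
    (hab : ((j : ℝ) + 1) / (2 * (j : ℝ) + 1) ≤ a + b)
    (hb : 1 / (2 * (2 * (j : ℝ) + 1)) < b) :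
    ∃ C : ℝ≥0∞, C ≠ ⊤ ∧ ∀ lam : ℝ, 1 ≤ lam → ∀ F H : ℤ × ℝ → ℝ≥0∞, Measurable F → Measurable H →
      ∫⁻ x, (∫⁻ q, ENNReal.ofReal (halfKer j lam a b x q) * (F q * H (x - q))
        ∂((freqMeasure lam).prod volume)) ^ 2 ∂((freqMeasure lam).prod volume) ≤
      C * ((∫⁻ q, F q ^ 2 ∂((freqMeasure lam).prod volume)) *
        ∫⁻ q, H q ^ 2 ∂((freqMeasure lam).prod volume)) := by
  set P : ℝ := 2 * (j : ℝ) + 1 with hP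
  have hj1 : (1 : ℝ) ≤ j := by exact_mod_cast hj
  have hP0 : 0 < P := by positivity
  have hP1 : 1 < P := by linarith
  have hPi : 1 / P < 1 := by rw [div_lt_one hP0]; exact hP1
  have hPi0 : 0 < 1 / P := by positivity
  set ε : ℝ := min (b - 1 / (2 * P)) (1 / 2) with hεd
  have hε : 0 < ε := lt_min (by linarith) (by norm_num)
  have hε1 : ε ≤ 1 / 2 := min_le_right _ _
  have hbε : 1 / (2 * P) + ε ≤ b := by
    have := min_le_left (b - 1 / (2 * P)) (1 / 2); linarith
  set θ : ℝ := 1 - 1 / P with hθ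
  have hθ0 : 0 < θ := by linarith
  have hθ1 : θ < 1 := by linarith
  obtain ⟨C₁, hC₁⟩ := lintegral_highKer_sq_le hj hε hε1
  set C₂ : ℝ≥0∞ := ENNReal.ofReal (2 ^ (2 * ε + θ / P) * (2 * (1 / (2 * ε) + 1 / (θ / P))))
  set C₃ : ℝ≥0∞ := ENNReal.ofReal (2 * 2 ^ θ * 3 ^ (1 - θ) / (1 - θ))
  refine ⟨2 * (ENNReal.ofReal C₁ + C₂ * C₃), ?_, fun lam hl F H hF hH => ?_⟩
  · exact ENNReal.mul_ne_top (by simp) (ENNReal.add_ne_top.2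
      ⟨ENNReal.ofReal_ne_top, ENNReal.mul_ne_top ENNReal.ofReal_ne_top ENNReal.ofReal_ne_top⟩)
  let K : ℤ × ℝ → ℤ × ℝ → ℝ≥0∞ := fun x q => ENNReal.ofReal (highKer j lam ε x q)
  let V : ℤ × ℝ → ℤ × ℝ → ℝ≥0∞ := fun x q => ENNReal.ofReal (Real.sqrt (lowV j lam (2 * ε) θ x q))
  let U : ℤ → ℤ × ℝ → ℝ≥0∞ := fun m z => ENNReal.ofReal (Real.sqrt (lowU j lam θ m z))
  have hK : Measurable (Function.uncurry K) := (measurable_highKer j lam ε).ennreal_ofReal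
  have hV : Measurable (Function.uncurry V) :=
    (measurable_lowV j lam (2 * ε) θ).sqrt.ennreal_ofReal
  have hU : Measurable (Function.uncurry U) := (measurable_lowU j lam θ).sqrt.ennreal_ofReal
  have hVC : ∀ x m, ∫⁻ t, V x (m, t) ^ 2 ≤ C₂ := by
    intro x m
    refine le_trans (le_of_eq ?_) (lintegral_lowV_le j (lam := lam) (by positivity) (by linarith) hθ0 x m)
    refine lintegral_congr fun t => ?_
    rw [← ENNReal.ofReal_pow (Real.sqrt_nonneg _), Real.sq_sqrt (lowV_nonneg _ _ _ _ _ _)]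
  have hUC : ∀ z, ∫⁻ m, U m z ^ 2 ∂(freqMeasure lam) ≤ C₃ := by
    intro z
    have hR : 1 ≤ modn j lam z ^ (1 / P) := Real.one_le_rpow (one_le_modn _ _ _) hPi0.le
    refine le_trans (le_of_eq ?_) (lintegral_profile_le hθ0.le hθ1 hR hl 0)
    refine lintegral_congr fun m => ?_
    rw [← ENNReal.ofReal_pow (Real.sqrt_nonneg _), Real.sq_sqrt (lowU_nonneg _ _ _ _ _)]
    rfl
  set ν := (freqMeasure lam).prod (volume : Measure ℝ) with hν
  let A : ℤ × ℝ → ℝ≥0∞ := fun x => ∫⁻ q, K x q * (F q * H (x - q)) ∂ν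
  let B : ℤ × ℝ → ℝ≥0∞ := fun x => ∫⁻ q, (V x q * U x.1 (x - q)) * (F q * H (x - q)) ∂ν
  have hAm : Measurable A := by
    refine Measurable.lintegral_prod_right (Measurable.mul ?_ (by fun_prop))
    exact hK
  have hA := bilin_of_kernel_sq ν hK hF hH (hC₁ lam hl)
  have hB := bilin_of_kernel_fiber (freqMeasure lam) hV hU hF hH hVC hUC
  have hpt : ∀ x, ∫⁻ q, ENNReal.ofReal (halfKer j lam a b x q) * (F q * H (x - q)) ∂ν
      ≤ A x + B x := by
    intro x
    rw [← lintegral_add_left]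
    · refine lintegral_mono fun q => ?_
      rw [← add_mul]
      gcongr
      refine (ENNReal.ofReal_le_ofReal (halfKer_le hε hab hbε hθ0.le x q)).trans ?_
      refine ENNReal.ofReal_add_le.trans ?_
      rw [ENNReal.ofReal_mul (Real.sqrt_nonneg _)]
    · refine Measurable.mul ?_ (by fun_prop)
      exact hK.of_uncurry_left
  exact lintegral_sq_le_of_le_add ν hAm hpt hA hB

lemma L2L_eq (lam : ℝ) {T : ℤ × ℝ → ℝ≥0∞} (hT : Measurable T) :
    L2L lam (fun m τ => T (m, τ)) =
      (∫⁻ x, T x ^ 2 ∂((freqMeasure lam).prod volume)) ^ (1 / 2 : ℝ) := by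
  rw [L2L, lintegral_prod _ (hT.pow_const 2).aemeasurable, lintegral_freqMeasure]

lemma L2L_mono (lam : ℝ) {f g : ℤ → ℝ → ℝ≥0∞} (h : ∀ m τ, f m τ ≤ g m τ) :
    L2L lam f ≤ L2L lam g := by
  unfold L2L
  gcongr with m τ
  exact h m τ

/-- The convolution over nonzero frequencies is at most the full convolution on `ℤ × ℝ`. -/
lemma convL_le (lam : ℝ) {f g : ℤ × ℝ → ℝ≥0∞} (hf : Measurable f) (hg : Measurable g)
    (m : ℤ) (τ : ℝ) :
    convL lam (fun m τ => f (m, τ)) (fun m τ => g (m, τ)) m τ ≤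
      ∫⁻ q, f q * g ((m, τ) - q) ∂((freqMeasure lam).prod volume) := by
  rw [lintegral_prod _ (by fun_prop), lintegral_freqMeasure, convL]
  gcongr with n
  split_ifs
  · rfl
  · exact zero_le

/-- The product `⟨σ₁⟩^{-a} ⟨σ₂⟩^{-b}` splits according to which modulation is smaller. -/
lemma weight_le (j : ℕ) (lam a b : ℝ) (x q : ℤ × ℝ) :
    modn j lam q ^ (-a) * modn j lam (x - q) ^ (-b) ≤
      halfKer j lam a b x q + halfKer j lam b a x (x - q) := by
  have h1 := halfKer_nonneg j lam a b x q
  have h2 := halfKer_nonneg j lam b a x (x - q)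
  rcases le_total (modn j lam q) (modn j lam (x - q)) with h | h
  · rw [halfKer, if_pos h]; linarith
  · rw [halfKer.eq_def j lam b a, sub_sub_cancel, if_pos h]; linarith

/-- **Lemma 2.3, first estimate:** λ-uniform bilinear Strichartz estimate
`‖uv‖_{L²_{xt}} ≤ C‖u‖_{X_{0,a}}‖v‖_{X_{0,b}}` on the Fourier side. -/
theorem stmt_6 (j : ℕ) (hj : 1 ≤ j) (a b : ℝ)
    (hab : ((j : ℝ) + 1) / (2 * (j : ℝ) + 1) ≤ a + b)
    (hmin : 1 / (2 * (2 * (j : ℝ) + 1)) < min a b) :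
    ∃ C : ℝ, 0 < C ∧ ∀ lam : ℝ, 1 ≤ lam → ∀ f g : ℤ → ℝ → ℝ≥0∞,
      Measurable (Function.uncurry f) → Measurable (Function.uncurry g) →
      (∀ τ, f 0 τ = 0) → (∀ τ, g 0 τ = 0) →
      L2L lam (convL lam f g) ≤
        ENNReal.ofReal C * L2L lam (wtL j lam a f) * L2L lam (wtL j lam b g) := by
  obtain ⟨ha, hb⟩ := lt_min_iff.1 hmin
  obtain ⟨C₁, hC₁, h₁⟩ := half_bound hj hab hb
  obtain ⟨C₂, hC₂, h₂⟩ := half_bound hj (hab.trans_eq (add_comm a b)) ha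
  have hCt : (2 * (C₁ + C₂)) ^ (1 / 2 : ℝ) ≠ ⊤ :=
    ENNReal.rpow_ne_top_of_nonneg (by norm_num) 
      (ENNReal.mul_ne_top (by simp) (ENNReal.add_ne_top.2 ⟨hC₁, hC₂⟩))
  refine ⟨((2 * (C₁ + C₂)) ^ (1 / 2 : ℝ)).toReal + 1, by positivity, ?_⟩
  intro lam hl f g hf hg _ _
  set ν := (freqMeasure lam).prod (volume : Measure ℝ) with hν
  have hm := measurable_modn j lam
  let F : ℤ × ℝ → ℝ≥0∞ := fun q => ENNReal.ofReal (modn j lam q ^ a) * Function.uncurry f q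
  let G : ℤ × ℝ → ℝ≥0∞ := fun q => ENNReal.ofReal (modn j lam q ^ b) * Function.uncurry g q
  have hF : Measurable F := by fun_prop
  have hG : Measurable G := by fun_prop
  have hunw : ∀ (c : ℝ) (φ : ℤ × ℝ → ℝ≥0∞) (q : ℤ × ℝ), φ q =
      ENNReal.ofReal (modn j lam q ^ (-c)) * (ENNReal.ofReal (modn j lam q ^ c) * φ q) := by
    intro c φ q
    have h0 : 0 < modn j lam q := one_pos.trans_le (one_le_modn _ _ _)
    rw [← mul_assoc, ← ENNReal.ofReal_mul (by positivity), ← Real.rpow_add h0]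
    simp
  let A : ℤ × ℝ → ℝ≥0∞ := fun x =>
    ∫⁻ q, ENNReal.ofReal (halfKer j lam a b x q) * (F q * G (x - q)) ∂ν
  let B : ℤ × ℝ → ℝ≥0∞ := fun x =>
    ∫⁻ q, ENNReal.ofReal (halfKer j lam b a x q) * (G q * F (x - q)) ∂ν
  have hmh : ∀ c d : ℝ, Measurable fun z : (ℤ × ℝ) × (ℤ × ℝ) =>
      ENNReal.ofReal (halfKer j lam c d z.1 z.2) :=
    fun c d => (measurable_halfKer j lam c d).ennreal_ofReal
  have hAm : Measurable A := ((hmh a b).mul (by fun_prop)).lintegral_prod_right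
  have hBm : Measurable B := ((hmh b a).mul (by fun_prop)).lintegral_prod_right
  have hconv : ∀ m τ, convL lam f g m τ ≤ A (m, τ) + B (m, τ) := by
    intro m τ
    refine (convL_le lam hf hg m τ).trans ?_
    have hswap := lintegral_sub_left_eq_self (μ := ν) (fun q =>
      ENNReal.ofReal (halfKer j lam b a (m, τ) q) * (G q * F ((m, τ) - q))) (m, τ)
    simp only [sub_sub_cancel] at hswap
    simp only [A, B]
    rw [← hswap, ← lintegral_add_left]
    · refine lintegral_mono fun q => ?_
      have hp : 0 ≤ modn j lam q ^ (-a) :=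
        Real.rpow_nonneg (zero_le_one.trans (one_le_modn _ _ _)) _
      calc _ = ENNReal.ofReal (modn j lam q ^ (-a) * modn j lam ((m, τ) - q) ^ (-b)) *
            (F q * G ((m, τ) - q)) := by
            rw [hunw a (Function.uncurry f) q, hunw b (Function.uncurry g) ((m, τ) - q),
              ENNReal.ofReal_mul hp]
            simp only [F, G]
            ring
        _ ≤ (ENNReal.ofReal (halfKer j lam a b (m, τ) q) +
              ENNReal.ofReal (halfKer j lam b a (m, τ) ((m, τ) - q))) *
            (F q * G ((m, τ) - q)) := by
            gcongr
            exact (ENNReal.ofReal_le_ofReal (weight_le j lam a b _ q)).trans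
              ENNReal.ofReal_add_le
        _ = _ := by ring
    · refine Measurable.mul ?_ (by fun_prop)
      exact ((measurable_halfKer j lam a b).comp measurable_prodMk_left).ennreal_ofReal
  have hA := h₁ lam hl F G hF hG
  have hB := h₂ lam hl G F hG hF
  rw [mul_comm (∫⁻ q, G q ^ 2 ∂_)] at hB
  have hsq := lintegral_sq_le_of_le_add ν (T := fun x => A x + B x) hAm (fun _ => le_rfl) hA hB
  calc L2L lam (convL lam f g) ≤ L2L lam (fun m τ => A (m, τ) + B (m, τ)) := L2L_mono lam hconv
    _ = (∫⁻ x, (A x + B x) ^ 2 ∂ν) ^ (1 / 2 : ℝ) := L2L_eq lam (hAm.add hBm)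
    _ ≤ ((2 * (C₁ + C₂)) * ((∫⁻ q, F q ^ 2 ∂ν) * ∫⁻ q, G q ^ 2 ∂ν)) ^ (1 / 2 : ℝ) := by gcongr
    _ = (2 * (C₁ + C₂)) ^ (1 / 2 : ℝ) * L2L lam (wtL j lam a f) * L2L lam (wtL j lam b g) := by
        rw [ENNReal.mul_rpow_of_nonneg (2 * (C₁ + C₂)) _ (by norm_num),
          ENNReal.mul_rpow_of_nonneg (∫⁻ q, F q ^ 2 ∂ν) _ (by norm_num), ← L2L_eq lam hF,
          ← L2L_eq lam hG, ← mul_assoc]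
        rfl
    _ ≤ _ := by
        gcongr
        rw [← ENNReal.ofReal_toReal hCt]
        exact ENNReal.ofReal_le_ofReal (by rw [ENNReal.toReal_ofReal (by positivity)]; linarith)

end
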